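/- For every k ≥ 2 and every n ≥ d − 1, the associated polynomials satisfy S_n^{[k]}(z) = (z − β_{k−2}) · S_{n+1}^{[k−1]}(z) − α²_{k−2} · S_{n+2}^{[k−2]}(z) identically in z, where β_m and α_m are the coefficients of the three-term recurrence Q_{m+1}(z) = (z − β_m) Q_m(z) − α_m² Q_{m−1}(z) of the monic orthogonal polynomials Q_m with respect to μ_ρ (with Q_{−1}=0, Q_0=1 and α_0² = ∫_{−1}^{1} dμ_ρ). -/

import Mathlib

open MeasureTheory Polynomial Filter
open scoped Classical

noncomputable section

/-- The discrete Sobolev inner product with a single derivative order `d j` at each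
mass point `c j`, with weight `η j`. -/
def sobInner (μ : Measure ℝ) {N : ℕ} (c : Fin N → ℝ) (d : Fin N → ℕ) (η : Fin N → ℝ)
    (f g : Polynomial ℝ) : ℝ :=
  (∫ x in Set.Icc (-1:ℝ) 1, f.eval x * g.eval x ∂μ) +
    ∑ j, η j * ((derivative^[d j] f).eval (c j)) * ((derivative^[d j] g).eval (c j))

/-- The general discrete Sobolev inner product with weights `η j i` for the `i`-th
derivatives, `0 ≤ i ≤ d j`, at each mass point `c j`. -/
def sobInner2 (μ : Measure ℝ) {N : ℕ} (c : Fin N → ℝ) (d : Fin N → ℕ) (η : Fin N → ℕ → ℝ)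
    (f g : Polynomial ℝ) : ℝ :=
  (∫ x in Set.Icc (-1:ℝ) 1, f.eval x * g.eval x ∂μ) +
    ∑ j, ∑ i ∈ Finset.range (d j + 1),
      η j i * ((derivative^[i] f).eval (c j)) * ((derivative^[i] g).eval (c j))

/-- Sequential order for the data of a discrete Sobolev inner product:
`d` is nondecreasing and each `c k` lies outside the convex hull of
`(-1,1) ∪ {c 1, …, c (k-1)}`. -/
def SeqOrdered {N : ℕ} (c : Fin N → ℝ) (d : Fin N → ℕ) : Prop :=
  (∀ i j : Fin N, i ≤ j → d i ≤ d j) ∧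
    ∀ k : Fin N, c k ∉ convexHull ℝ (Set.Ioo (-1:ℝ) 1 ∪ c '' {j : Fin N | j < k})

/-- The polynomial ρ(x) = ∏_{c j < -1} (x - c j)^(d j + 1) · ∏_{c j > 1} (c j - x)^(d j + 1). -/
def rhoPoly {N : ℕ} (c : Fin N → ℝ) (d : Fin N → ℕ) : Polynomial ℝ :=
  (∏ j ∈ Finset.univ.filter (fun j => c j < -1), (X - C (c j)) ^ (d j + 1)) *
    ∏ j ∈ Finset.univ.filter (fun j => (1:ℝ) < c j), (C (c j) - X) ^ (d j + 1)

/-- ν = number of mass points greater than 1. -/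
def nuCount {N : ℕ} (c : Fin N → ℝ) : ℕ :=
  (Finset.univ.filter (fun j : Fin N => (1:ℝ) < c j)).card

/-- μ belongs to the Nevai class M(0,1): supp μ = [-1,1] and the monic orthogonal
polynomials of μ satisfy a three-term recurrence with aₙ → 1/2 and bₙ → 0. -/
def NevaiClass (μ : Measure ℝ) : Prop :=
  μ (Set.Icc (-1:ℝ) 1)ᶜ = 0 ∧
  (∀ x ∈ Set.Icc (-1:ℝ) 1, ∀ ε > 0, 0 < μ (Metric.ball x ε)) ∧
  ∃ (P : ℕ → Polynomial ℝ) (a b : ℕ → ℝ),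
    (∀ n, (P n).Monic) ∧ (∀ n, (P n).natDegree = n) ∧
    (∀ n, ∀ m < n, (∫ x in Set.Icc (-1:ℝ) 1, x ^ m * (P n).eval x ∂μ) = 0) ∧
    P 0 = 1 ∧ P 1 = X - C (b 0) ∧
    (∀ n, P (n + 2) = (X - C (b (n + 1))) * P (n + 1) - C ((a (n + 1)) ^ 2) * P n) ∧
    Tendsto a atTop (nhds (1 / 2)) ∧ Tendsto b atTop (nhds 0)

/-- The segment [-1,1] regarded as a subset of ℂ. -/
def segIcc : Set ℂ := Complex.ofReal '' Set.Icc (-1:ℝ) 1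

/-- Markov-type function: z ↦ ∫ q(x) / (z - x) w(x) dμ(x). -/
def markovHat (μ : Measure ℝ) (w q : Polynomial ℝ) (z : ℂ) : ℂ :=
  ∫ x in Set.Icc (-1:ℝ) 1, ((q.eval x * w.eval x : ℝ) : ℂ) / (z - (x : ℂ)) ∂μ

/-- Associated function: z ↦ ∫ (p(z) - p(x)) / (z - x) · q(x) w(x) dμ(x). -/
def assocFun (μ : Measure ℝ) (w q p : Polynomial ℝ) (z : ℂ) : ℂ :=
  ∫ x in Set.Icc (-1:ℝ) 1,
    ((aeval z p - ((p.eval x : ℝ) : ℂ)) / (z - (x : ℂ))) * ((q.eval x * w.eval x : ℝ) : ℂ) ∂μ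

/-- A function changes sign at `t` if arbitrarily close to `t`, on the left and right,
it takes values of opposite signs. -/
def SignChangeAt (p : Polynomial ℝ) (t : ℝ) : Prop :=
  ∀ δ > 0, ∃ x ∈ Set.Ioo (t - δ) t, ∃ y ∈ Set.Ioo t (t + δ), p.eval x * p.eval y < 0

/-- N₀(f; A): number of zeros of `f` in `A`, counted with multiplicity. -/
def N0 (f : Polynomial ℝ) (A : Set ℝ) : ℕ :=
  (f.roots.filter (fun x => x ∈ A)).card

lemma aux_int (μ : Measure ℝ) [IsFiniteMeasure μ] (p : Polynomial ℝ) :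
    IntegrableOn (fun x => p.eval x) (Set.Icc (-1:ℝ) 1) μ :=
  p.continuous.integrableOn_Icc

lemma aux_sob_zero (μ : Measure ℝ) [IsFiniteMeasure μ] {N : ℕ} (c : Fin N → ℝ) (d : Fin N → ℕ)
    (η : Fin N → ℕ → ℝ) (g : Polynomial ℝ) (n : ℕ)
    (h : ∀ m < n, sobInner2 μ c d η (X ^ m) g = 0) (f : Polynomial ℝ) (hf : f.natDegree < n) :
    sobInner2 μ c d η f g = 0 := by
  have hadd : ∀ a b, sobInner2 μ c d η (a + b) g =
      sobInner2 μ c d η a g + sobInner2 μ c d η b g := by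
    intro a b
    unfold sobInner2
    have h1 : ∫ x in Set.Icc (-1:ℝ) 1, (a + b).eval x * g.eval x ∂μ =
        (∫ x in Set.Icc (-1:ℝ) 1, a.eval x * g.eval x ∂μ) +
        ∫ x in Set.Icc (-1:ℝ) 1, b.eval x * g.eval x ∂μ := by
      rw [← integral_add]
      · simp [add_mul]
      · simpa [IntegrableOn] using aux_int μ (a * g)
      · simpa [IntegrableOn] using aux_int μ (b * g)
    rw [h1]
    simp only [iterate_map_add, eval_add, mul_add, add_mul, Finset.sum_add_distrib]
    ring
  have hsmul : ∀ (r : ℝ) a, sobInner2 μ c d η (r • a) g = r * sobInner2 μ c d η a g := by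
    intro r a
    unfold sobInner2
    simp only [iterate_derivative_smul, eval_smul, smul_eq_mul, mul_add, Finset.mul_sum, mul_assoc,
      integral_const_mul]
    congr 1
    refine Finset.sum_congr rfl fun j _ => Finset.sum_congr rfl fun i _ => by ring
  have hmem : f ∈ degreeLT ℝ n := by
    rw [mem_degreeLT]
    exact lt_of_le_of_lt degree_le_natDegree (by exact_mod_cast hf)
  rw [degreeLT_eq_span_X_pow] at hmem
  clear hf
  induction hmem using Submodule.span_induction with
  | mem x hx =>
    simp only [Finset.coe_image, Set.mem_image, Finset.coe_range, Set.mem_Iio] at hx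
    obtain ⟨m, hm, rfl⟩ := hx
    exact h m hm
  | zero => simpa using hsmul 0 0
  | add x y _ _ hx hy => rw [hadd, hx, hy, add_zero]
  | smul r x _ hx => rw [hsmul, hx, mul_zero]

lemma aux_rho_dvd {N : ℕ} (c : Fin N → ℝ) (d : Fin N → ℕ)
    (hc : ∀ j, c j ∉ Set.Icc (-1:ℝ) 1) (j : Fin N) :
    (X - C (c j)) ^ (d j + 1) ∣ rhoPoly c d := by
  unfold rhoPoly
  by_cases h : c j < -1
  · exact Dvd.dvd.mul_right (Finset.dvd_prod_of_mem
      (fun j => (X - C (c j)) ^ (d j + 1)) (by simp [h])) _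
  · have h1 : 1 < c j := by
      by_contra h1
      exact hc j ⟨not_lt.mp h, not_lt.mp h1⟩
    refine Dvd.dvd.mul_left (Dvd.dvd.trans ?_ (Finset.dvd_prod_of_mem
      (fun j => (C (c j) - X) ^ (d j + 1)) (a := j) (by simp [h1]))) _
    apply pow_dvd_pow_of_dvd
    exact ⟨-1, by ring⟩

lemma aux_rho_deg {N : ℕ} (c : Fin N → ℝ) (d : Fin N → ℕ) :
    (rhoPoly c d).natDegree ≤ N + ∑ j, d j := by
  unfold rhoPoly
  have hX : ∀ j, ((X - C (c j)) ^ (d j + 1)).natDegree ≤ d j + 1 := fun j => by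
    simp
  have hX' : ∀ j, ((C (c j) - X) ^ (d j + 1)).natDegree ≤ d j + 1 := fun j => by
    rw [natDegree_pow, ← neg_sub, natDegree_neg]; simp
  refine natDegree_mul_le.trans ((add_le_add ((natDegree_prod_le _ _).trans
    (Finset.sum_le_sum fun j _ => hX j)) ((natDegree_prod_le _ _).trans
    (Finset.sum_le_sum fun j _ => hX' j))).trans ?_)
  rw [← Finset.sum_union]
  · refine (Finset.sum_le_sum_of_subset (Finset.subset_univ _)).trans ?_
    rw [Finset.sum_add_distrib]
    simp [add_comm]
  · rw [Finset.disjoint_left]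
    intro j h1 h2
    simp only [Finset.mem_filter, Finset.mem_univ, true_and] at h1 h2
    linarith

lemma aux_orth (μ : Measure ℝ) [IsFiniteMeasure μ] {N : ℕ} (c : Fin N → ℝ) (d : Fin N → ℕ)
    (hc : ∀ j, c j ∉ Set.Icc (-1:ℝ) 1)
    (η : Fin N → ℕ → ℝ) (g : Polynomial ℝ) (n : ℕ)
    (h : ∀ m < n, sobInner2 μ c d η (X ^ m) g = 0) (q : Polynomial ℝ)
    (hq : N + ∑ j, d j + q.natDegree < n) :
    ∫ x in Set.Icc (-1:ℝ) 1, g.eval x * (q.eval x * (rhoPoly c d).eval x) ∂μ = 0 := by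
  have h0 := aux_sob_zero μ c d η g n h (q * rhoPoly c d)
    (lt_of_le_of_lt natDegree_mul_le (by have := aux_rho_deg c d; omega))
  unfold sobInner2 at h0
  rw [Finset.sum_eq_zero, add_zero] at h0
  · rw [← h0]
    congr 1; ext x; simp; ring
  · intro j _
    refine Finset.sum_eq_zero fun i hi => ?_
    have hi' : i ≤ d j := by simpa [Nat.lt_succ_iff] using hi
    have h1 := pow_sub_dvd_iterate_derivative_of_pow_dvd (p := q * rhoPoly c d) i
      (Dvd.dvd.mul_left (aux_rho_dvd c d hc j) q)
    have h2 : (derivative^[i] (q * rhoPoly c d)).eval (c j) = 0 := by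
      have h3 : (X - C (c j)) ∣ derivative^[i] (q * rhoPoly c d) :=
        (dvd_pow_self _ (by omega)).trans h1
      exact dvd_iff_isRoot.mp h3
    rw [h2]; ring

lemma aux_diff (μ : Measure ℝ) [IsFiniteMeasure μ] (P q w : Polynomial ℝ) (b z : ℝ)
    (hz : z ∉ Set.Icc (-1:ℝ) 1)
    (h : ∫ x in Set.Icc (-1:ℝ) 1, P.eval x * (q.eval x * w.eval x) ∂μ = 0) (r : Polynomial ℝ)
    (a : ℝ) :
    ∫ x in Set.Icc (-1:ℝ) 1, ((P.eval z - P.eval x) / (z - x)) *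
        (((X - C b) * q - C a * r).eval x * w.eval x) ∂μ =
      (z - b) * (∫ x in Set.Icc (-1:ℝ) 1, ((P.eval z - P.eval x) / (z - x)) *
        (q.eval x * w.eval x) ∂μ)
      - a * (∫ x in Set.Icc (-1:ℝ) 1, ((P.eval z - P.eval x) / (z - x)) *
        (r.eval x * w.eval x) ∂μ)
      - P.eval z * ∫ x in Set.Icc (-1:ℝ) 1, q.eval x * w.eval x ∂μ := by
  have hne : ∀ x ∈ Set.Icc (-1:ℝ) 1, z - x ≠ 0 := by
    intro x hx h0
    exact hz (by rwa [sub_eq_zero.mp h0])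
  have hint : ∀ p : Polynomial ℝ, IntegrableOn (fun x => ((P.eval z - P.eval x) / (z - x)) *
        (p.eval x * w.eval x)) (Set.Icc (-1:ℝ) 1) μ := by
    intro p
    apply ContinuousOn.integrableOn_compact isCompact_Icc
    refine ContinuousOn.mul (ContinuousOn.div ?_ ?_ hne) ?_ <;> fun_prop
  have hqw : IntegrableOn (fun x => q.eval x * w.eval x) (Set.Icc (-1:ℝ) 1) μ := by
    simpa using aux_int μ (q * w)
  have hPqw : IntegrableOn (fun x => P.eval x * (q.eval x * w.eval x)) (Set.Icc (-1:ℝ) 1) μ := by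
    simpa using aux_int μ (P * (q * w))
  have key : ∫ x in Set.Icc (-1:ℝ) 1, ((P.eval z - P.eval x) / (z - x)) *
        (((X - C b) * q - C a * r).eval x * w.eval x) ∂μ =
      ∫ x in Set.Icc (-1:ℝ) 1, ((((z - b) * (((P.eval z - P.eval x) / (z - x)) *
        (q.eval x * w.eval x)) - a * (((P.eval z - P.eval x) / (z - x)) *
        (r.eval x * w.eval x))) - P.eval z * (q.eval x * w.eval x))
        + P.eval x * (q.eval x * w.eval x)) ∂μ := by
    refine setIntegral_congr_fun measurableSet_Icc fun x hx => ?_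
    have := hne x hx
    simp only [eval_sub, eval_mul, eval_X, eval_C]
    field_simp
    ring
  rw [key, integral_add, integral_sub, integral_sub, h]
  · simp only [integral_const_mul, add_zero]
  · exact (hint q).const_mul _
  · exact (hint r).const_mul _
  · exact ((hint q).const_mul _).sub ((hint r).const_mul _)
  · exact hqw.const_mul _
  · exact (((hint q).const_mul _).sub ((hint r).const_mul _)).sub (hqw.const_mul _)
  · exact hPqw

/-- For `k ≥ 2` and `n ≥ d - 1`,
`S_n^{[k]}(z) = (z - β_{k-2}) S_{n+1}^{[k-1]}(z) - α²_{k-2} S_{n+2}^{[k-2]}(z)`. -/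
theorem statement7
    (μ : Measure ℝ) [IsFiniteMeasure μ]
    (hμsupp : μ (Set.Icc (-1:ℝ) 1)ᶜ = 0)
    (hμinf : ∀ p : Polynomial ℝ, p ≠ 0 → 0 < ∫ x in Set.Icc (-1:ℝ) 1, (p.eval x) ^ 2 ∂μ)
    {N : ℕ} (c : Fin N → ℝ) (d : Fin N → ℕ)
    (hc : ∀ j, c j ∉ Set.Icc (-1:ℝ) 1)
    (η : Fin N → ℕ → ℝ) (hη : ∀ j i, i ≤ d j → 0 ≤ η j i) (hηd : ∀ j, 0 < η j (d j))
    (S : ℕ → Polynomial ℝ)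
    (hSmonic : ∀ n, (S n).Monic) (hSdeg : ∀ n, (S n).natDegree = n)
    (hSorth : ∀ n, ∀ m < n, sobInner2 μ c d η (X ^ m) (S n) = 0)
    (Q : ℕ → Polynomial ℝ)
    (hQmonic : ∀ n, (Q n).Monic) (hQdeg : ∀ n, (Q n).natDegree = n)
    (hQorth : ∀ n, ∀ m < n,
      (∫ x in Set.Icc (-1:ℝ) 1, x ^ m * (Q n).eval x * (rhoPoly c d).eval x ∂μ) = 0)
    (β α : ℕ → ℝ)
    (hQ0 : Q 0 = 1) (hQ1 : Q 1 = X - C (β 0))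
    (hQrec : ∀ m, Q (m + 2) = (X - C (β (m + 1))) * Q (m + 1) - C ((α (m + 1)) ^ 2) * Q m)
    (hα0 : (α 0) ^ 2 = ∫ x in Set.Icc (-1:ℝ) 1, (rhoPoly c d).eval x ∂μ)
    (Sk : ℕ → ℕ → ℝ → ℝ)
    (hSk0 : ∀ n z, Sk 0 n z = (S n).eval z)
    (hSkS : ∀ k n z, Sk (k + 1) n z =
      ∫ x in Set.Icc (-1:ℝ) 1,
        (((S (n + k + 1)).eval z - (S (n + k + 1)).eval x) / (z - x)) *
          ((Q k).eval x * (rhoPoly c d).eval x) ∂μ)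
    (k : ℕ) (hk : 2 ≤ k) (n : ℕ) (hn : N + ∑ j, d j ≤ n + 1) :
    ∀ z : ℝ, z ∉ Set.Icc (-1:ℝ) 1 →
      Sk k n z =
        (z - β (k - 2)) * Sk (k - 1) (n + 1) z - (α (k - 2)) ^ 2 * Sk (k - 2) (n + 2) z := by
  intro z hz
  obtain ⟨k, rfl⟩ := Nat.exists_eq_add_of_le' hk
  have ho := aux_orth μ c d hc η (S (n + k + 2)) _ (hSorth (n + k + 2)) (Q k)
    (by rw [hQdeg]; omega)
  simp only [Nat.add_sub_cancel, show k + 2 - 1 = k + 1 from rfl]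
  rw [show k + 2 = (k + 1) + 1 from rfl, hSkS, hSkS, show n + (k + 1) + 1 = n + k + 2 by ring,
    show n + 1 + k + 1 = n + k + 2 by ring]
  rcases k with _ | m
  · have h := aux_diff μ _ _ _ (β 0) z hz ho 0 0
    rw [hSk0]
    simp only [mul_zero, sub_zero, zero_mul, hQ0, mul_one, eval_one, one_mul] at h
    simp only [zero_add, hQ1, hQ0, eval_one, one_mul, hα0]
    simp only [add_zero] at h ⊢
    rw [h]; ring
  · have h := aux_diff μ _ _ _ (β (m + 1)) z hz ho (Q m) (α (m + 1) ^ 2)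
    have h0 := hQorth (m + 1) 0 (by omega)
    simp only [pow_zero, one_mul] at h0
    rw [h0, mul_zero, sub_zero] at h
    rw [hSkS, show n + 2 + m + 1 = n + (m + 1) + 2 by ring, show m + 1 + 1 = m + 2 from rfl, hQrec, h]

end
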